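/- Let N be a matching in G such that every (A'∪B')-complete matching in G'_N has weight at most 0. Then N is a popular matching in G. -/

import Mathlib

/-!
Many-to-many matchings with two-sided preferences, votes, and popularity,
following "Popular Matchings in the Many-to-Many Setting".
-/

/-- The vote of a vertex with rank function `r` (smaller rank = more preferred)
comparing two options, where `none` stands for `null` (ranked below everything). -/
def vote {β : Type*} [DecidableEq β] (r : β → ℕ) : Option β → Option β → ℤ
  | none, none => 0
  | some _, none => 1
  | none, some _ => -1
  | some x, some y => if x = y then 0 else if r x < r y then 1 else -1

/-- The common length `k` of the arrays compared in `δ_u(S₀,S₁)`: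
after padding the smaller of `S₀, S₁` with nulls and removing common elements. -/
def kOf {β : Type*} [DecidableEq β] (S₀ S₁ : Finset β) : ℕ :=
  max S₀.card S₁.card - (S₀ ∩ S₁).card

/-- `S₀ ∖ S₁`, viewed as an array of `Option`s padded with `none` (null) to length `k`. -/
noncomputable def padded {β : Type*} [DecidableEq β] (S₀ S₁ : Finset β) (k : ℕ) : List (Option β) :=
  ((S₀ \ S₁).toList.map some) ++ List.replicate (k - (S₀ \ S₁).card) none

/-- `δ_u(S₀,S₁)`: the minimum, over all permutations `σ` of `{1,…,k}`, of
`Σ_i vote_u(S'₀[i], S'₁[σ(i)])`. -/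
noncomputable def deltaSet {β : Type*} [DecidableEq β] (r : β → ℕ) (S₀ S₁ : Finset β) : ℤ :=
  Finset.univ.inf' ⟨1, Finset.mem_univ 1⟩ fun σ : Equiv.Perm (Fin (kOf S₀ S₁)) =>
    ∑ i : Fin (kOf S₀ S₁),
      vote r ((padded S₀ S₁ (kOf S₀ S₁)).getD (i : ℕ) none)
             ((padded S₁ S₀ (kOf S₀ S₁)).getD (σ i : ℕ) none)

/-- A bipartite instance `G = (A ∪ B, E)` with capacities `≥ 1` and strict
preferences of every vertex over its neighbors (given by injective-on-neighbors
rank functions; smaller rank = more preferred). -/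
structure PrefInstance (α β : Type*) [Fintype α] [Fintype β] [DecidableEq α] [DecidableEq β] where
  E : Finset (α × β)
  capA : α → ℕ
  capB : β → ℕ
  rankA : α → β → ℕ
  rankB : β → α → ℕ
  capA_pos : ∀ a, 1 ≤ capA a
  capB_pos : ∀ b, 1 ≤ capB b
  rankA_injOn : ∀ a, Set.InjOn (rankA a) {b | (a, b) ∈ E}
  rankB_injOn : ∀ b, Set.InjOn (rankB b) {a | (a, b) ∈ E}

namespace PrefInstance

variable {α β : Type*} [Fintype α] [Fintype β] [DecidableEq α] [DecidableEq β]

/-- `M(a)`: the set of `B`-vertices matched to `a` in `M`. -/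
def rowSet (M : Finset (α × β)) (a : α) : Finset β :=
  Finset.univ.filter fun b => (a, b) ∈ M

/-- `M(b)`: the set of `A`-vertices matched to `b` in `M`. -/
def colSet (M : Finset (α × β)) (b : β) : Finset α :=
  Finset.univ.filter fun a => (a, b) ∈ M

variable (I : PrefInstance α β)

/-- `M` is a matching in `G`: a subset of `E` respecting all capacities. -/
def IsMatching (M : Finset (α × β)) : Prop :=
  M ⊆ I.E ∧ (∀ a, (rowSet M a).card ≤ I.capA a) ∧ (∀ b, (colSet M b).card ≤ I.capB b)

/-- `Δ_a(M₀,M₁) = δ_a(M₀(a), M₁(a))` for `a ∈ A`. -/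
noncomputable def DeltaA (M₀ M₁ : Finset (α × β)) (a : α) : ℤ :=
  deltaSet (I.rankA a) (rowSet M₀ a) (rowSet M₁ a)

/-- `Δ_b(M₀,M₁) = δ_b(M₀(b), M₁(b))` for `b ∈ B`. -/
noncomputable def DeltaB (M₀ M₁ : Finset (α × β)) (b : β) : ℤ :=
  deltaSet (I.rankB b) (colSet M₀ b) (colSet M₁ b)

/-- `Δ(M₀,M₁) = Σ_{u ∈ A∪B} Δ_u(M₀,M₁)`. -/
noncomputable def Delta (M₀ M₁ : Finset (α × β)) : ℤ :=
  (∑ a, I.DeltaA M₀ M₁ a) + ∑ b, I.DeltaB M₀ M₁ b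

/-- `M` is a popular matching: `Δ(M,T) ≥ 0` against every matching `T`. -/
def Popular (M : Finset (α × β)) : Prop :=
  I.IsMatching M ∧ ∀ T, I.IsMatching T → 0 ≤ I.Delta M T

/-- `M` is a weakly popular matching: `Δ(T,M) ≤ 0` for every matching `T`. -/
def WeaklyPopular (M : Finset (α × β)) : Prop :=
  I.IsMatching M ∧ ∀ T, I.IsMatching T → I.Delta T M ≤ 0

/-- The edge `(a,b) ∈ E ∖ M` blocks `M`. -/
def Blocks (M : Finset (α × β)) (a : α) (b : β) : Prop :=
  (a, b) ∈ I.E ∧ (a, b) ∉ M ∧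
  ((rowSet M a).card < I.capA a ∨ ∃ b' ∈ rowSet M a, I.rankA a b < I.rankA a b') ∧
  ((colSet M b).card < I.capB b ∨ ∃ a' ∈ colSet M b, I.rankB b a < I.rankB b a')

/-- `M` is a pairwise-stable matching: no edge blocks it. -/
def Stable (M : Finset (α × β)) : Prop :=
  I.IsMatching M ∧ ∀ a b, ¬ I.Blocks M a b

end PrefInstance
namespace PrefInstance

variable {α β : Type*} [Fintype α] [Fintype β] [DecidableEq α] [DecidableEq β]
variable (I : PrefInstance α β)

/-- `A'`: the set of clones `a_i`, `1 ≤ i ≤ cap(a)`, of the vertices of `A`. -/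
abbrev CloneA := (a : α) × Fin (I.capA a)

/-- `B'`: the set of clones `b_j`, `1 ≤ j ≤ cap(b)`, of the vertices of `B`. -/
abbrev CloneB := (b : β) × Fin (I.capB b)

/-- `N'` is a realization of the matching `N` on the cloned vertex sets: a
(one-to-one) matching on `A' × B'` whose projection is a bijection onto `N`. -/
def IsRealization (N : Finset (α × β)) (N' : Finset (I.CloneA × I.CloneB)) : Prop :=
  (∀ e ∈ N', ∀ f ∈ N', e.1 = f.1 → e = f) ∧
  (∀ e ∈ N', ∀ f ∈ N', e.2 = f.2 → e = f) ∧
  N'.image (fun e => (e.1.1, e.2.1)) = N ∧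
  N'.card = N.card

/-- The partner of `x ∈ A'` in a one-to-one matching `N'` on clones (`none` if unmatched,
i.e. matched to the last resort `ℓ(x)` in `N*`). -/
noncomputable def partnerA (N' : Finset (I.CloneA × I.CloneB)) (x : I.CloneA) :
    Option I.CloneB :=
  if h : ∃ y, (x, y) ∈ N' then some h.choose else none

/-- The partner of `y ∈ B'` in a one-to-one matching `N'` on clones (`none` if unmatched). -/
noncomputable def partnerB (N' : Finset (I.CloneA × I.CloneB)) (y : I.CloneB) :
    Option I.CloneA :=
  if h : ∃ x, (x, y) ∈ N' then some h.choose else none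

/-- `(x, y) ∈ A' × B'` is an edge of the graph `G'_N`: either the underlying pair is an
edge of `E ∖ N` (all clone copies present), or `(x,y)` is the unique copy in `N'` of an
edge of `N`. -/
def GNEdge (N : Finset (α × β)) (N' : Finset (I.CloneA × I.CloneB))
    (x : I.CloneA) (y : I.CloneB) : Prop :=
  ((x.1, y.1) ∈ I.E ∧ (x.1, y.1) ∉ N) ∨ (x, y) ∈ N'

/-- The weight `wt_N(x,y) = vote_a(b, N*(a_i)) + vote_b(a, N*(b_j))` of an edge of `G'_N`
lying in `A' × B'` (a last-resort partner in `N*` is read as null). -/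
noncomputable def wtE (N' : Finset (I.CloneA × I.CloneB))
    (x : I.CloneA) (y : I.CloneB) : ℤ :=
  vote (I.rankA x.1) (some y.1) (Option.map Sigma.fst (I.partnerA N' x)) +
  vote (I.rankB y.1) (some x.1) (Option.map Sigma.fst (I.partnerB N' y))

/-- A one-to-one matching on the clone sets (each clone is in at most one edge).
Together with the implicit last-resort edges for unmatched clones, this represents
an `(A' ∪ B')`-complete matching in `G'_N`. -/
def IsCloneMatching (T' : Finset (I.CloneA × I.CloneB)) : Prop :=
  (∀ e ∈ T', ∀ f ∈ T', e.1 = f.1 → e = f) ∧ (∀ e ∈ T', ∀ f ∈ T', e.2 = f.2 → e = f)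

/-- The weight `wt_N` of the `(A' ∪ B')`-complete matching represented by `T'`:
the sum of the weights of its `A' × B'` edges plus, for every clone left unmatched
in `T'` (hence matched to its last resort), the weight `wt_N(v, ℓ(v))`, which is
`-1` if `v` is matched in `N'` and `0` otherwise. -/
noncomputable def wtTotal (N' T' : Finset (I.CloneA × I.CloneB)) : ℤ :=
  (∑ e ∈ T', I.wtE N' e.1 e.2) +
  (∑ x : I.CloneA,
    if ∀ y, (x, y) ∉ T' then (if ∃ y, (x, y) ∈ N' then (-1 : ℤ) else 0) else 0) +
  (∑ y : I.CloneB,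
    if ∀ x, (x, y) ∉ T' then (if ∃ x, (x, y) ∈ N' then (-1 : ℤ) else 0) else 0)

/-- A 2-level witness for `N` (with realization `N'`): partitions
`A' = A'₀ ∪ A'₁` and `B' = B'₀ ∪ B'₁` (encoded by level functions `lA, lB`, where
`true` means level 1) such that clones of `A'` unmatched in `N'` are in `A'₁`, clones
of `B'` unmatched in `N'` are in `B'₀`, `N' ⊆ (A'₀ × B'₀) ∪ (A'₁ × B'₁)`, every edge
of `G'_N` in `A'₁ × B'₀` has weight `-2`, and every edge of `G'_N` in
`(A'₀ × B'₀) ∪ (A'₁ × B'₁)` has weight `≤ 0`. -/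
def TwoLevelWitness (N : Finset (α × β)) (N' : Finset (I.CloneA × I.CloneB))
    (lA : I.CloneA → Bool) (lB : I.CloneB → Bool) : Prop :=
  (∀ x : I.CloneA, (∀ y, (x, y) ∉ N') → lA x = true) ∧
  (∀ y : I.CloneB, (∀ x, (x, y) ∉ N') → lB y = false) ∧
  (∀ e ∈ N', lA e.1 = lB e.2) ∧
  (∀ x y, I.GNEdge N N' x y → lA x = true → lB y = false → I.wtE N' x y = -2) ∧
  (∀ x y, I.GNEdge N N' x y → lA x = lB y → I.wtE N' x y ≤ 0)

end PrefInstance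
/-!
A competing matching `T` is turned into a complete matching of `G'_N` of weight `-Δ(N, T)`; as that
weight is at most `0`, `Δ(N, T) ≥ 0`.

At a vertex `u`, a permutation attaining the minimum in `δ_u(N(u), T(u))` says which element of
`N(u) ∖ T(u)` (or null) is exchanged for which element of `T(u) ∖ N(u)` (or null). The clones of `u`
carry the elements of `N(u)`, so performing these exchanges on the clones distributes `T(u)` among
them, and by antisymmetry of votes the clones' votes for their new contents against the old ones add
up to `-δ_u(N(u), T(u))`. Joining `a_i` to `b_j` when `a_i` now carries `b` and `b_j` carries `a`
gives a matching on clones. Elements of `N(u) ∩ T(u)` stay where they are, so its edges over `N ∩ T`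
are those of `N'` and it lies in `G'_N`.
-/

theorem exists_injective_comp_eq_of_card_fiber_le {ι κ V : Type*} [Fintype ι] [Fintype κ]
    [DecidableEq V] (f : ι → V) (g : κ → V)
    (h : ∀ v, (Finset.univ.filter fun i => f i = v).card ≤
      (Finset.univ.filter fun k => g k = v).card) :
    ∃ c : ι → κ, Function.Injective c ∧ g ∘ c = f := by
  have hfiber : ∀ v, Nonempty ({i // f i = v} ↪ {k // g k = v}) := fun v =>
    Function.Embedding.nonempty_of_card_le (by simpa only [Fintype.card_subtype] using h v)
  let e := fun v => (hfiber v).some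
  refine ⟨fun i => Equiv.sigmaFiberEquiv g (Sigma.map id (fun v => e v)
    ((Equiv.sigmaFiberEquiv f).symm i)), ?_, funext fun i => (e (f i) ⟨i, rfl⟩).2⟩
  exact (Equiv.injective _).comp ((Function.injective_id.sigma_map fun v => (e v).injective).comp
    (Equiv.injective _))

theorem extend_eq_iff {ι κ V : Type*} {c : ι → κ} (hc : Function.Injective c) {f : ι → V}
    {p : κ → V} {k : κ} {v : V} :
    Function.extend c f p k = v ↔
      (k ∉ Set.range c ∧ p k = v) ∨ ∃ i, c i = k ∧ f i = v := by
  by_cases hk : k ∈ Set.range c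
  · obtain ⟨i, rfl⟩ := hk
    simp [hc.extend_apply, hc.eq_iff]
  · rw [Function.extend_apply' f p k hk]
    grind

/-! ### Listings of finite sets -/

/-- The slots `i : ι` list the finite set `S`: every element of `S` is in exactly one slot, and the
remaining slots are empty (`none`, the paper's null). Both the padded arrays in the definition of
`δ_u` and the clones of a vertex list sets in this sense. -/
structure IsListing {ι γ : Type*} (f : ι → Option γ) (S : Finset γ) : Prop where
  mem_iff : ∀ b, b ∈ S ↔ ∃ i, f i = some b
  eq_of_eq_some : ∀ {i j b}, f i = some b → f j = some b → i = j

namespace IsListing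

variable {ι κ γ : Type*} {f : ι → Option γ} {p : κ → Option γ} {S D D' : Finset γ}

theorem mem (hf : IsListing f S) {i : ι} {b : γ} (h : f i = some b) : b ∈ S :=
  (hf.mem_iff b).2 ⟨i, h⟩

theorem comp_equiv (hf : IsListing f S) (e : κ ≃ ι) : IsListing (f ∘ e) S where
  mem_iff b := (hf.mem_iff b).trans (e.surjective.exists (p := fun i => f i = some b))
  eq_of_eq_some hi hj := e.injective (hf.eq_of_eq_some hi hj)

theorem card_none_add_card [Fintype ι] (hf : IsListing f S) :
    (Finset.univ.filter fun i => f i = none).card + S.card = Fintype.card ι := by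
  classical
  have himage : (Finset.univ.filter fun i => ¬f i = none).image f = S.map .some := by
    ext (_ | b) <;> simp [hf.mem_iff]
    grind
  have hinj : Set.InjOn f (Finset.univ.filter fun i => ¬f i = none) := by
    intro i hi j _ hij
    obtain ⟨b, hb⟩ := Option.ne_none_iff_exists'.1 (Finset.mem_filter.1 hi).2
    exact hf.eq_of_eq_some hb (hij ▸ hb)
  rw [← S.card_map .some, ← himage, Finset.card_image_of_injOn hinj,
    Finset.card_filter_add_card_filter_not, Finset.card_univ]

theorem card_le [Fintype ι] (hf : IsListing f S) : S.card ≤ Fintype.card ι :=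
  hf.card_none_add_card ▸ Nat.le_add_left _ _

theorem card_fiber_some [Fintype ι] [DecidableEq γ] (hf : IsListing f S) (b : γ) :
    (Finset.univ.filter fun i => f i = some b).card = if b ∈ S then 1 else 0 := by
  split_ifs with hb
  · obtain ⟨i, hi⟩ := (hf.mem_iff b).1 hb
    exact Finset.card_eq_one.2 ⟨i, by ext j; simpa using ⟨(hf.eq_of_eq_some · hi), (· ▸ hi)⟩⟩
  · simpa using fun i hi => hb (hf.mem hi)

theorem exists_injective_comp_eq [Fintype ι] [Fintype κ] (hf : IsListing f D) (hp : IsListing p S)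
    (hDS : D ⊆ S) (hcard : Fintype.card ι + S.card ≤ Fintype.card κ + D.card) :
    ∃ c : ι → κ, Function.Injective c ∧ p ∘ c = f := by
  classical
  refine exists_injective_comp_eq_of_card_fiber_le f p ?_
  rintro (_ | b)
  · have := hf.card_none_add_card
    have := hp.card_none_add_card
    omega
  · rw [hf.card_fiber_some, hp.card_fiber_some]
    grind

theorem mem_sdiff_of_notMem_range [DecidableEq γ] {c : ι → κ} (hp : IsListing p S)
    (hpc : IsListing (p ∘ c) D) {k : κ} (hk : k ∉ Set.range c) {b : γ} (h : p k = some b) :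
    b ∈ S \ D := by
  refine Finset.mem_sdiff.2 ⟨hp.mem h, fun hb => ?_⟩
  obtain ⟨i, hi⟩ := (hpc.mem_iff b).1 hb
  exact hk ⟨i, hp.eq_of_eq_some hi h⟩

theorem extend [DecidableEq γ] {c : ι → κ} (hc : Function.Injective c) (hp : IsListing p S)
    (hpc : IsListing (p ∘ c) D) (hf : IsListing f D') (hdisj : Disjoint S D') :
    IsListing (Function.extend c f p) (S \ D ∪ D') := by
  refine ⟨fun b => ?_, fun {k k' b} hk hk' => ?_⟩
  · simp only [extend_eq_iff hc]
    constructor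
    · intro hb
      rcases Finset.mem_union.1 hb with hb | hb
      · obtain ⟨hbS, hbD⟩ := Finset.mem_sdiff.1 hb
        obtain ⟨k, hk⟩ := (hp.mem_iff b).1 hbS
        exact ⟨k, .inl ⟨fun ⟨i, hi⟩ => hbD (hpc.mem (hi ▸ hk)), hk⟩⟩
      · obtain ⟨i, hi⟩ := (hf.mem_iff b).1 hb
        exact ⟨c i, .inr ⟨i, rfl, hi⟩⟩
    · rintro ⟨k, ⟨hkc, hk⟩ | ⟨i, -, hi⟩⟩
      · exact Finset.mem_union_left _ (hp.mem_sdiff_of_notMem_range hpc hkc hk)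
      · exact Finset.mem_union_right _ (hf.mem hi)
  · have hdisj' : ∀ {k i}, p k = some b → f i ≠ some b := fun hk hi =>
      Finset.disjoint_left.1 hdisj (hp.mem hk) (hf.mem hi)
    rcases (extend_eq_iff hc).1 hk with ⟨-, hk⟩ | ⟨i, rfl, hi⟩ <;>
      rcases (extend_eq_iff hc).1 hk' with ⟨-, hk'⟩ | ⟨i', rfl, hi'⟩
    · exact hp.eq_of_eq_some hk hk'
    · exact (hdisj' hk hi').elim
    · exact (hdisj' hk' hi).elim
    · rw [hf.eq_of_eq_some hi hi']

end IsListing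

/-! ### Votes and the minimum defining `δ_u` -/

section Vote

variable {β : Type*} [DecidableEq β]

theorem vote_self (r : β → ℕ) (x : Option β) : vote r x x = 0 := by
  cases x <;> simp [vote]

theorem vote_none_left (r : β → ℕ) (x : Option β) :
    vote r none x = if x = none then 0 else -1 := by
  cases x <;> simp [vote]

theorem vote_swap {r : β → ℕ} {S : Set β} (hr : S.InjOn r) {x y : Option β}
    (hx : ∀ b ∈ x, b ∈ S) (hy : ∀ b ∈ y, b ∈ S) : vote r y x = -vote r x y := by
  rcases x with _ | a <;> rcases y with _ | b <;> simp only [vote, neg_zero, neg_neg]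
  have : r a = r b → a = b := fun hab => hr (hx a rfl) (hy b rfl) hab
  grind

theorem kOf_comm (S₀ S₁ : Finset β) : kOf S₀ S₁ = kOf S₁ S₀ := by
  rw [kOf, kOf, max_comm, Finset.inter_comm]

theorem kOf_add_card (S₀ S₁ : Finset β) :
    kOf S₀ S₁ + S₀.card = max S₀.card S₁.card + (S₀ \ S₁).card := by
  have := Finset.card_sdiff_add_card_inter S₀ S₁
  unfold kOf
  omega

theorem card_sdiff_le_kOf (S₀ S₁ : Finset β) : (S₀ \ S₁).card ≤ kOf S₀ S₁ := by
  have := kOf_add_card S₀ S₁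
  omega

-- Positions beyond the end of the array read as `none`, so the padding does not show in `getD`.
theorem padded_getD (S₀ S₁ : Finset β) (k n : ℕ) :
    (padded S₀ S₁ k).getD n none = (S₀ \ S₁).toList[n]? := by
  grind [padded]

theorem isListing_getElem?_of_nodup {l : List β} (hl : l.Nodup) {k : ℕ} (hk : l.length ≤ k) :
    IsListing (fun i : Fin k => l[(i : ℕ)]?) l.toFinset where
  mem_iff b := by
    rw [List.mem_toFinset, List.mem_iff_getElem?]
    refine ⟨fun ⟨n, hn⟩ => ⟨⟨n, ?_⟩, hn⟩, fun ⟨i, hi⟩ => ⟨i, hi⟩⟩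
    exact (List.getElem?_eq_some_iff.1 hn).1.trans_le hk
  eq_of_eq_some hi hj :=
    Fin.ext ((List.getElem?_inj (List.getElem?_eq_some_iff.1 hi).1 hl).1 (hi.trans hj.symm))

theorem isListing_padded (S₀ S₁ : Finset β) {k : ℕ} (hk : (S₀ \ S₁).card ≤ k) :
    IsListing (fun i : Fin k => (padded S₀ S₁ k).getD i none) (S₀ \ S₁) := by
  simpa only [padded_getD, Finset.toList_toFinset] using
    isListing_getElem?_of_nodup (Finset.nodup_toList (S₀ \ S₁)) (by rwa [Finset.length_toList])

theorem exists_isListing_sum_vote_eq_deltaSet (r : β → ℕ) (S₀ S₁ : Finset β) :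
    ∃ l₀ l₁ : Fin (kOf S₀ S₁) → Option β, IsListing l₀ (S₀ \ S₁) ∧ IsListing l₁ (S₁ \ S₀) ∧
      ∑ i, vote r (l₀ i) (l₁ i) = deltaSet r S₀ S₁ := by
  obtain ⟨σ, -, hσ⟩ := Finset.exists_mem_eq_inf' (s := Finset.univ) ⟨1, Finset.mem_univ 1⟩
    fun σ : Equiv.Perm (Fin (kOf S₀ S₁)) => ∑ i : Fin (kOf S₀ S₁),
      vote r ((padded S₀ S₁ (kOf S₀ S₁)).getD i none) ((padded S₁ S₀ (kOf S₀ S₁)).getD (σ i) none)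
  exact ⟨_, _, isListing_padded S₀ S₁ (card_sdiff_le_kOf S₀ S₁),
    (isListing_padded S₁ S₀ (kOf_comm S₀ S₁ ▸ card_sdiff_le_kOf S₁ S₀)).comp_equiv σ, hσ.symm⟩

theorem sum_vote_extend {ι κ : Type*} [Fintype ι] [Fintype κ] (r : β → ℕ) {c : ι → κ}
    (hc : Function.Injective c) (l : ι → Option β) (p : κ → Option β) :
    ∑ k, vote r (Function.extend c l p k) (p k) = ∑ i, vote r (l i) (p (c i)) := by
  refine (Fintype.sum_of_injective c hc _ _ (fun k hk => ?_) fun i => ?_).symm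
  · rw [Function.extend_apply' l p k hk, vote_self]
  · rw [hc.extend_apply]

/-! ### Redistributing the contents of clones -/

/-- The exchanges dictated by a minimizing permutation are performed in the slots `c i` carrying the
elements of `S₀ \ S₁`, supplemented by as many empty slots as there are nulls in the array. -/
theorem IsListing.exists_refill {κ : Type*} [Fintype κ] {r : β → ℕ} {S₀ S₁ : Finset β}
    (hr : Set.InjOn r (S₀ ∪ S₁ : Finset β)) (hS₁ : S₁.card ≤ Fintype.card κ) {p : κ → Option β}
    (hp : IsListing p S₀) :
    ∃ q : κ → Option β, IsListing q S₁ ∧ (∀ k, ∀ b ∈ S₁, p k = some b → q k = some b) ∧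
      ∑ k, vote r (q k) (p k) = -deltaSet r S₀ S₁ := by
  obtain ⟨l₀, l₁, hl₀, hl₁, hsum⟩ := exists_isListing_sum_vote_eq_deltaSet r S₀ S₁
  obtain ⟨c, hc, rfl⟩ := hl₀.exists_injective_comp_eq hp Finset.sdiff_subset <| by
    rw [Fintype.card_fin, kOf_add_card]
    exact Nat.add_le_add_right (max_le hp.card_le hS₁) _
  refine ⟨Function.extend c l₁ p, ?_, fun k b hb hk => ?_, ?_⟩
  · have hS₁_eq : S₀ \ (S₀ \ S₁) ∪ S₁ \ S₀ = S₁ := by grind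
    simpa only [hS₁_eq] using hp.extend hc hl₀ hl₁ Finset.disjoint_sdiff
  · refine (extend_eq_iff hc).2 (.inl ⟨?_, hk⟩)
    rintro ⟨i, rfl⟩
    exact (Finset.mem_sdiff.1 (hl₀.mem hk)).2 hb
  · rw [sum_vote_extend r hc, ← hsum, ← Finset.sum_neg_distrib]
    refine Finset.sum_congr rfl fun i _ => vote_swap hr (fun b hb => ?_) fun b hb => ?_
    · exact Finset.mem_union_left _ (Finset.sdiff_subset (hl₀.mem hb))
    · exact Finset.mem_union_right _ (Finset.sdiff_subset (hl₁.mem hb))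

theorem exists_refill_sigma {α : Type*} [Fintype α] {κ : α → Type*} [∀ a, Fintype (κ a)]
    {r : α → β → ℕ} {S₀ S₁ : α → Finset β} (hr : ∀ a, Set.InjOn (r a) (S₀ a ∪ S₁ a : Finset β))
    (hS₁ : ∀ a, (S₁ a).card ≤ Fintype.card (κ a)) {p : (Σ a, κ a) → Option β}
    (hp : ∀ a, IsListing (fun i => p ⟨a, i⟩) (S₀ a)) :
    ∃ q : (Σ a, κ a) → Option β, (∀ a, IsListing (fun i => q ⟨a, i⟩) (S₁ a)) ∧
      (∀ x, ∀ b ∈ S₁ x.1, p x = some b → q x = some b) ∧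
      ∑ x, vote (r x.1) (q x) (p x) = -∑ a, deltaSet (r a) (S₀ a) (S₁ a) := by
  choose q hq hkeep hsum using fun a => (hp a).exists_refill (hr a) (hS₁ a)
  refine ⟨fun x => q x.1 x.2, hq, fun x => hkeep x.1 x.2, ?_⟩
  rw [Fintype.sum_sigma, ← Finset.sum_neg_distrib]
  exact Finset.sum_congr rfl fun a _ => hsum a

end Vote

/-! ### Relations between clones -/

section Content

variable {α β : Type*} {κ : α → Type*} {κ' : β → Type*}

open Classical in
/-- The vertex `b` one of whose clones `⟨b, j⟩` is related to `x`, or `none` if nothing is related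
to `x`. Used for right-unique `R`, where `b` does not depend on choices. -/
noncomputable def content {X : Type*} (R : X → (Σ b, κ' b) → Prop) (x : X) : Option β :=
  if h : ∃ y, R x y then some h.choose.1 else none

theorem content_eq_none_iff {X : Type*} {R : X → (Σ b, κ' b) → Prop} {x : X} :
    content R x = none ↔ ∀ y, ¬R x y := by
  rw [content]
  split_ifs with h
  · exact iff_of_false nofun (not_forall_not.2 h)
  · exact iff_of_true rfl (not_exists.1 h)

theorem content_eq_some {X : Type*} {R : X → (Σ b, κ' b) → Prop} (hR : Relator.RightUnique R)
    {x : X} {y : Σ b, κ' b} (h : R x y) : content R x = some y.1 := by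
  have hex : ∃ y, R x y := ⟨y, h⟩
  rw [content, dif_pos hex, hR hex.choose_spec h]

theorem content_eq_some_iff {X : Type*} {R : X → (Σ b, κ' b) → Prop} (hR : Relator.RightUnique R)
    {x : X} {b : β} : content R x = some b ↔ ∃ j, R x ⟨b, j⟩ := by
  refine ⟨fun h => ?_, fun ⟨j, hj⟩ => content_eq_some hR hj⟩
  have hne : ¬∀ y, ¬R x y := fun hnone => by simp [content_eq_none_iff.2 hnone] at h
  obtain ⟨⟨b', j⟩, hy⟩ := not_forall_not.1 hne
  obtain rfl : b' = b := Option.some_injective _ ((content_eq_some hR hy).symm.trans h)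
  exact ⟨j, hy⟩

theorem isListing_content {R : (Σ a, κ a) → (Σ b, κ' b) → Prop} (hR : Relator.RightUnique R)
    (hproj : ∀ {x x' y y'}, R x y → R x' y' → x.1 = x'.1 → y.1 = y'.1 → x = x') {a : α}
    {S : Finset β} (hS : ∀ b, b ∈ S ↔ ∃ i j, R ⟨a, i⟩ ⟨b, j⟩) :
    IsListing (fun i => content R ⟨a, i⟩) S where
  mem_iff b := by simp only [hS, content_eq_some_iff hR]
  eq_of_eq_some hi hj := by
    obtain ⟨_, hi⟩ := (content_eq_some_iff hR).1 hi
    obtain ⟨_, hj⟩ := (content_eq_some_iff hR).1 hj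
    exact sigma_mk_injective (hproj hi hj rfl rfl)

theorem vote_content_of_forall_not [DecidableEq β] {X : Type*} {R R₀ : X → (Σ b, κ' b) → Prop}
    {x : X} (h : ∀ y, ¬R x y) [Decidable (∃ y, R₀ x y)] (r : β → ℕ) :
    vote r (content R x) (content R₀ x) = if ∃ y, R₀ x y then -1 else 0 := by
  simp only [content_eq_none_iff.2 h, vote_none_left, content_eq_none_iff, ← not_exists, ite_not]

/-- Clones `x` of `a` and `y` of `b` are paired when `q` assigns `b` to `x` and `q'` assigns `a` to
`y`. This turns an assignment of vertices to clones on either side into a matching of clones. -/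
def Paired (q : (Σ a, κ a) → Option β) (q' : (Σ b, κ' b) → Option α) (x : Σ a, κ a)
    (y : Σ b, κ' b) : Prop :=
  q x = some y.1 ∧ q' y = some x.1

variable {q : (Σ a, κ a) → Option β} {q' : (Σ b, κ' b) → Option α} {S : α → Finset β}
  {S' : β → Finset α}

theorem paired_comm {x : Σ a, κ a} {y : Σ b, κ' b} : Paired q q' x y ↔ Paired q' q y x :=
  and_comm

theorem rightUnique_paired (hq' : ∀ b, IsListing (fun j => q' ⟨b, j⟩) (S' b)) :
    Relator.RightUnique (Paired q q') := by
  rintro x ⟨b, j⟩ ⟨b', j'⟩ ⟨hx, hy⟩ ⟨hx', hy'⟩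
  obtain rfl : b = b' := Option.some_injective _ (hx.symm.trans hx')
  rw [(hq' b).eq_of_eq_some hy hy']

theorem content_paired (hq : ∀ a, IsListing (fun i => q ⟨a, i⟩) (S a))
    (hq' : ∀ b, IsListing (fun j => q' ⟨b, j⟩) (S' b)) (hS : ∀ {a b}, b ∈ S a → a ∈ S' b) :
    content (Paired q q') = q := by
  ext ⟨a, i⟩ b
  simp only [content_eq_some_iff (rightUnique_paired hq')]
  refine ⟨fun ⟨_, h, _⟩ => h, fun h => ?_⟩
  obtain ⟨j, hj⟩ := ((hq' b).mem_iff a).1 (hS ((hq a).mem h))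
  exact ⟨j, h, hj⟩

end Content

theorem sum_add_sum_ite_notMem_image {ι κ M : Type*} [Fintype κ] [DecidableEq κ] [AddCommMonoid M]
    {s : Finset ι} {f : ι → κ} (hf : Set.InjOn f s) (g : κ → M) :
    ∑ i ∈ s, g (f i) + ∑ k, (if k ∉ s.image f then g k else 0) = ∑ k, g k := by
  rw [← Finset.sum_image hf, ← Finset.sum_filter, ← Finset.compl_filter, Finset.filter_univ_mem,
    Finset.sum_add_sum_compl]

namespace PrefInstance

/-! ### Weights of complete matchings -/

theorem mem_rowSet {α β : Type*} [Fintype β] [DecidableEq α] [DecidableEq β]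
    {M : Finset (α × β)} {a : α} {b : β} : b ∈ rowSet M a ↔ (a, b) ∈ M := by
  simp [rowSet]

theorem mem_colSet {α β : Type*} [Fintype α] [DecidableEq α] [DecidableEq β]
    {M : Finset (α × β)} {a : α} {b : β} : a ∈ colSet M b ↔ (a, b) ∈ M := by
  simp [colSet]

section Weight

variable {α β : Type*} [Fintype α] [Fintype β] [DecidableEq α] [DecidableEq β]
  {I : PrefInstance α β} {N T : Finset (α × β)} {M N' T' : Finset (I.CloneA × I.CloneB)}

theorem IsCloneMatching.rightUnique (hM : I.IsCloneMatching M) :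
    Relator.RightUnique fun x y => (x, y) ∈ M :=
  fun _ _ _ h h' => congrArg Prod.snd (hM.1 _ h _ h' rfl)

theorem IsCloneMatching.rightUnique_swap (hM : I.IsCloneMatching M) :
    Relator.RightUnique fun y x => (x, y) ∈ M :=
  fun _ _ _ h h' => congrArg Prod.fst (hM.2 _ h _ h' rfl)

/-- The vertex of `B` whose clone the matching `M` on clones assigns to `x ∈ A'`. -/
noncomputable abbrev contentA (M : Finset (I.CloneA × I.CloneB)) : I.CloneA → Option β :=
  content fun x y => (x, y) ∈ M

/-- The vertex of `A` whose clone the matching `M` on clones assigns to `y ∈ B'`. -/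
noncomputable abbrev contentB (M : Finset (I.CloneA × I.CloneB)) : I.CloneB → Option α :=
  content fun y x => (x, y) ∈ M

theorem map_fst_partnerA (x : I.CloneA) : (I.partnerA M x).map Sigma.fst = contentA M x := by
  unfold partnerA contentA content
  split_ifs <;> rfl

theorem map_fst_partnerB (y : I.CloneB) : (I.partnerB M y).map Sigma.fst = contentB M y := by
  unfold partnerB contentB content
  split_ifs <;> rfl

theorem wtE_eq_of_mem (hT' : I.IsCloneMatching T') {x : I.CloneA} {y : I.CloneB}
    (h : (x, y) ∈ T') :
    I.wtE N' x y = vote (I.rankA x.1) (contentA T' x) (contentA N' x) +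
      vote (I.rankB y.1) (contentB T' y) (contentB N' y) := by
  have hA : contentA T' x = some y.1 := content_eq_some hT'.rightUnique h
  have hB : contentB T' y = some x.1 := content_eq_some hT'.rightUnique_swap h
  rw [wtE, map_fst_partnerA, map_fst_partnerB, hA, hB]

theorem sum_vote_contentA (hT' : I.IsCloneMatching T') :
    ∑ x, vote (I.rankA x.1) (contentA T' x) (contentA N' x) =
      ∑ e ∈ T', vote (I.rankA e.1.1) (contentA T' e.1) (contentA N' e.1) +
        ∑ x, if ∀ y, (x, y) ∉ T' then (if ∃ y, (x, y) ∈ N' then (-1 : ℤ) else 0) else 0 := by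
  rw [← sum_add_sum_ite_notMem_image (s := T') fun e he f hf => hT'.1 e he f hf]
  congr 1
  refine Finset.sum_congr rfl fun x _ => ite_congr (propext ?_) (fun h => ?_) fun _ => rfl
  · exact ⟨fun h y hy => h (Finset.mem_image_of_mem Prod.fst hy), by grind⟩
  · exact vote_content_of_forall_not (R₀ := fun x y => (x, y) ∈ N') h _

theorem sum_vote_contentB (hT' : I.IsCloneMatching T') :
    ∑ y, vote (I.rankB y.1) (contentB T' y) (contentB N' y) =
      ∑ e ∈ T', vote (I.rankB e.2.1) (contentB T' e.2) (contentB N' e.2) +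
        ∑ y, if ∀ x, (x, y) ∉ T' then (if ∃ x, (x, y) ∈ N' then (-1 : ℤ) else 0) else 0 := by
  rw [← sum_add_sum_ite_notMem_image (s := T') fun e he f hf => hT'.2 e he f hf]
  congr 1
  refine Finset.sum_congr rfl fun y _ => ite_congr (propext ?_) (fun h => ?_) fun _ => rfl
  · exact ⟨fun h x hx => h (Finset.mem_image_of_mem Prod.snd hx), by grind⟩
  · exact vote_content_of_forall_not (R₀ := fun y x => (x, y) ∈ N') h _

theorem wtTotal_eq_sum_vote (hT' : I.IsCloneMatching T') :
    I.wtTotal N' T' = ∑ x, vote (I.rankA x.1) (contentA T' x) (contentA N' x) +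
      ∑ y, vote (I.rankB y.1) (contentB T' y) (contentB N' y) := by
  have hedges : ∑ e ∈ T', I.wtE N' e.1 e.2 =
      ∑ e ∈ T', vote (I.rankA e.1.1) (contentA T' e.1) (contentA N' e.1) +
        ∑ e ∈ T', vote (I.rankB e.2.1) (contentB T' e.2) (contentB N' e.2) := by
    rw [← Finset.sum_add_distrib]
    exact Finset.sum_congr rfl fun e he => wtE_eq_of_mem hT' he
  rw [wtTotal, hedges, sum_vote_contentA hT', sum_vote_contentB hT']
  ring

theorem IsRealization.isCloneMatching (hN' : I.IsRealization N N') : I.IsCloneMatching N' :=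
  ⟨hN'.1, hN'.2.1⟩

theorem IsRealization.mem_iff (hN' : I.IsRealization N N') {a : α} {b : β} :
    (a, b) ∈ N ↔ ∃ i j, (⟨a, i⟩, ⟨b, j⟩) ∈ N' := by
  obtain ⟨-, -, rfl, -⟩ := hN'
  simp only [Finset.mem_image, Prod.mk.injEq]
  refine ⟨?_, fun ⟨i, j, h⟩ => ⟨_, h, rfl, rfl⟩⟩
  rintro ⟨⟨⟨_, i⟩, ⟨_, j⟩⟩, h, rfl, rfl⟩
  exact ⟨i, j, h⟩

theorem IsRealization.eq_and_eq_of_fst_eq (hN' : I.IsRealization N N') {x x' : I.CloneA}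
    {y y' : I.CloneB} (h : (x, y) ∈ N') (h' : (x', y') ∈ N') (hx : x.1 = x'.1)
    (hy : y.1 = y'.1) : x = x' ∧ y = y' := by
  have hinj : Set.InjOn (fun e : I.CloneA × I.CloneB => (e.1.1, e.2.1)) N' :=
    Finset.card_image_iff.1 (by rw [hN'.2.2.1, hN'.2.2.2])
  exact Prod.mk.inj (hinj h h' (Prod.ext hx hy))

theorem IsRealization.isListing_contentA (hN' : I.IsRealization N N') (a : α) :
    IsListing (fun i => contentA N' ⟨a, i⟩) (rowSet N a) :=
  isListing_content hN'.isCloneMatching.rightUnique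
    (fun h h' hx hy => (hN'.eq_and_eq_of_fst_eq h h' hx hy).1) fun _ => mem_rowSet.trans hN'.mem_iff

theorem IsRealization.isListing_contentB (hN' : I.IsRealization N N') (b : β) :
    IsListing (fun j => contentB N' ⟨b, j⟩) (colSet N b) :=
  isListing_content hN'.isCloneMatching.rightUnique_swap
    (fun h h' hy hx => (hN'.eq_and_eq_of_fst_eq h h' hx hy).2)
    fun _ => mem_colSet.trans (hN'.mem_iff.trans exists_comm)

theorem IsMatching.rowSet_subset (hN : I.IsMatching N) (a : α) :
    (rowSet N a : Set β) ⊆ {b | (a, b) ∈ I.E} :=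
  fun _ hb => hN.1 (mem_rowSet.1 hb)

theorem IsMatching.colSet_subset (hN : I.IsMatching N) (b : β) :
    (colSet N b : Set α) ⊆ {a | (a, b) ∈ I.E} :=
  fun _ ha => hN.1 (mem_colSet.1 ha)

/-! ### The matching on clones given by redistributed contents -/

theorem exists_isCloneMatching_content_eq {qA : I.CloneA → Option β} {qB : I.CloneB → Option α}
    (hqA : ∀ a, IsListing (fun i => qA ⟨a, i⟩) (rowSet T a))
    (hqB : ∀ b, IsListing (fun j => qB ⟨b, j⟩) (colSet T b)) :
    ∃ T' : Finset (I.CloneA × I.CloneB), I.IsCloneMatching T' ∧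
      (∀ {x y}, (x, y) ∈ T' → Paired qA qB x y) ∧ contentA T' = qA ∧ contentB T' = qB := by
  classical
  have hmem : ∀ x y, (x, y) ∈ Finset.univ.filter (fun e => Paired qA qB e.1 e.2) ↔
      Paired qA qB x y := by simp
  refine ⟨Finset.univ.filter fun e => Paired qA qB e.1 e.2, ⟨?_, ?_⟩, (hmem _ _).1, ?_, ?_⟩
  · rintro ⟨x, y⟩ he ⟨_, y'⟩ hf rfl
    rw [rightUnique_paired hqB ((hmem _ _).1 he) ((hmem _ _).1 hf)]
  · rintro ⟨x, y⟩ he ⟨x', _⟩ hf rfl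
    rw [rightUnique_paired hqA (paired_comm.1 ((hmem _ _).1 he))
      (paired_comm.1 ((hmem _ _).1 hf))]
  · simp only [contentA, hmem]
    exact content_paired hqA hqB fun h => mem_colSet.2 (mem_rowSet.1 h)
  · have hcomm : (fun y x => Paired qA qB x y) = Paired qB qA :=
      funext₂ fun _ _ => propext paired_comm
    simp only [contentB, hmem, hcomm]
    exact content_paired hqB hqA fun h => mem_rowSet.2 (mem_colSet.1 h)

theorem gnEdge_of_paired (hN' : I.IsRealization N N') (hT : T ⊆ I.E) {qA : I.CloneA → Option β}
    {qB : I.CloneB → Option α} (hqA : ∀ a, IsListing (fun i => qA ⟨a, i⟩) (rowSet T a))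
    (hqB : ∀ b, IsListing (fun j => qB ⟨b, j⟩) (colSet T b))
    (hkeepA : ∀ x, ∀ b ∈ rowSet T x.1, contentA N' x = some b → qA x = some b)
    (hkeepB : ∀ y, ∀ a ∈ colSet T y.1, contentB N' y = some a → qB y = some a)
    {x : I.CloneA} {y : I.CloneB} (h : Paired qA qB x y) : I.GNEdge N N' x y := by
  obtain ⟨a, i⟩ := x
  obtain ⟨b, j⟩ := y
  have hab : (a, b) ∈ T := mem_rowSet.1 ((hqA a).mem h.1)
  by_cases hN : (a, b) ∈ N
  · obtain ⟨i', j', h'⟩ := hN'.mem_iff.1 hN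
    have hi : qA ⟨a, i'⟩ = some b := hkeepA ⟨a, i'⟩ b (mem_rowSet.2 hab)
      (content_eq_some hN'.isCloneMatching.rightUnique h')
    have hj : qB ⟨b, j'⟩ = some a := hkeepB ⟨b, j'⟩ a (mem_colSet.2 hab)
      (content_eq_some hN'.isCloneMatching.rightUnique_swap h')
    obtain rfl := (hqA a).eq_of_eq_some h.1 hi
    obtain rfl := (hqB b).eq_of_eq_some h.2 hj
    exact .inr h'
  · exact .inl ⟨hT hab, hN⟩

theorem exists_isCloneMatching_wtTotal_eq_neg_Delta (hN : I.IsMatching N)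
    (hN' : I.IsRealization N N') (hT : I.IsMatching T) :
    ∃ T' : Finset (I.CloneA × I.CloneB), I.IsCloneMatching T' ∧
      (∀ e ∈ T', I.GNEdge N N' e.1 e.2) ∧ I.wtTotal N' T' = -I.Delta N T := by
  obtain ⟨qA, hqA, hkeepA, hsumA⟩ := exists_refill_sigma (r := I.rankA) (S₁ := rowSet T)
    (fun a => (I.rankA_injOn a).mono (by
      simpa using ⟨hN.rowSet_subset a, hT.rowSet_subset a⟩))
    (fun a => by simpa using hT.2.1 a) hN'.isListing_contentA
  obtain ⟨qB, hqB, hkeepB, hsumB⟩ := exists_refill_sigma (r := I.rankB) (S₁ := colSet T)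
    (fun b => (I.rankB_injOn b).mono (by
      simpa using ⟨hN.colSet_subset b, hT.colSet_subset b⟩))
    (fun b => by simpa using hT.2.2 b) hN'.isListing_contentB
  obtain ⟨T', hT', hpaired, rfl, rfl⟩ := exists_isCloneMatching_content_eq hqA hqB
  refine ⟨T', hT', fun e he =>
    gnEdge_of_paired hN' hT.1 hqA hqB hkeepA hkeepB (hpaired he), ?_⟩
  rw [wtTotal_eq_sum_vote hT', hsumA, hsumB, ← neg_add]
  rfl

end Weight

end PrefInstance

/-- Let `N` be a matching in `G` (with a fixed realization `N'`) such
that every `(A' ∪ B')`-complete matching in `G'_N` has weight at most 0. Then `N` is a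
popular matching in `G`. -/
theorem statement4 {α β : Type*} [Fintype α] [Fintype β] [DecidableEq α] [DecidableEq β]
    (I : PrefInstance α β) (N : Finset (α × β)) (hN : I.IsMatching N)
    (N' : Finset (I.CloneA × I.CloneB)) (hN' : I.IsRealization N N')
    (hwt : ∀ T' : Finset (I.CloneA × I.CloneB),
      I.IsCloneMatching T' → (∀ e ∈ T', I.GNEdge N N' e.1 e.2) → I.wtTotal N' T' ≤ 0) :
    I.Popular N := by
  refine ⟨hN, fun T hT => ?_⟩
  obtain ⟨T', hT', hedge, hweight⟩ :=
    PrefInstance.exists_isCloneMatching_wtTotal_eq_neg_Delta hN hN' hT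
  have hle : I.wtTotal N' T' ≤ 0 := hwt T' hT' hedge
  linarith
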